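/- Let G be a continuous self-map of a compact metric space Q and let (X_n)_{n≥1} be a sequence of periodic orbits of G with strictly increasing periods π(X_n); let μ_n be the uniform atomic probability measure on X_n. Fix ε > 0, a continuous function φ : Q → ℝ with |φ(x)| < M for all x ∈ Q, a natural number N, and subsets X̃_{m,ε} ⊆ X_m such that for all m > N: (1) #X̃_{m,ε}/#X_m > 1 − ε; and (2) for every n with N ≤ n < m and every x ∈ X̃_{m,ε}, |∫ φ dν_{π(X_n)}(x) − ∫ φ dμ_n| < ε. Then for all m > n > N one has |∫ φ dμ_m − ∫ φ dμ_n| ≤ (1 + 2M)ε. -/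

import Mathlib

open MeasureTheory Filter Metric Topology
open scoped ENNReal

/-- The uniform atomic probability measure on a finite set `X`:
`μ_X = (1/#X) ∑_{x ∈ X} δ_x`. -/
noncomputable def unifOrbit {Q : Type*} [MeasurableSpace Q] (X : Finset Q) :
    Measure Q := ((X.card : ℝ≥0∞))⁻¹ • ∑ x ∈ X, Measure.dirac x

/-- The `k`-measure of a point `x`: `ν_k(x) = (1/k) ∑_{i=0}^{k-1} δ_{G^i(x)}`. -/
noncomputable def nuMeas {Q : Type*} [MeasurableSpace Q] (G : Q → Q) (k : ℕ) (x : Q) :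
    Measure Q := ((k : ℝ≥0∞))⁻¹ • ∑ i ∈ Finset.range k, Measure.dirac (G^[i] x)

/-- `X` is a periodic orbit of `G`: the orbit of a periodic point, with period `π(X) = #X`. -/
def IsPeriodicOrbit {Q : Type*} (G : Q → Q) (X : Finset Q) : Prop :=
  0 < X.card ∧ ∃ x : Q, G^[X.card] x = x ∧ (X : Set Q) = {y | ∃ i < X.card, G^[i] x = y}

/-!
Since `G` permutes `X_m`, averaging `∫ φ dν_k(x)` over `x ∈ X_m` gives exactly `∫ φ dμ_m`, for
every `k ≠ 0`. With `k = π(X_n)`, these numbers lie within `ε` of `∫ φ dμ_n` on `X̃_{m,ε}`, and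
within `2M` on the remaining points, whose proportion in `X_m` is at most `ε`; so their mean is
within `ε + 2Mε` of `∫ φ dμ_n`.
-/

section Mean

lemma inv_card_smul_sum_sub_const {ι R E : Type*} [DivisionRing R] [CharZero R] [AddCommGroup E]
    [Module R E] {s : Finset ι} (hs : s.Nonempty) (f : ι → E) (c : E) :
    (s.card : R)⁻¹ • ∑ i ∈ s, (f i - c) = (s.card : R)⁻¹ • ∑ i ∈ s, f i - c := by
  have hcard : (s.card : R) ≠ 0 := Nat.cast_ne_zero.2 hs.card_ne_zero
  rw [Finset.sum_sub_distrib, Finset.sum_const, ← Nat.cast_smul_eq_nsmul R, smul_sub,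
    inv_smul_smul₀ hcard]

variable {ι E : Type*} [NormedAddCommGroup E] [NormedSpace ℝ E] {s t : Finset ι} {f : ι → E}

lemma norm_inv_card_smul_sum_le {M : ℝ} (hs : s.Nonempty) (hf : ∀ i ∈ s, ‖f i‖ ≤ M) :
    ‖(s.card : ℝ)⁻¹ • ∑ i ∈ s, f i‖ ≤ M := by
  have hcard : (0 : ℝ) < s.card := Nat.cast_pos.2 hs.card_pos
  rw [norm_smul, norm_inv, RCLike.norm_natCast, inv_mul_le_iff₀ hcard, ← nsmul_eq_mul]
  exact (norm_sum_le _ _).trans (Finset.sum_le_card_nsmul _ _ _ hf)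

lemma norm_inv_card_smul_sum_le_of_subset {ε δ C : ℝ} (hs : s.Nonempty) (hts : t ⊆ s)
    (hε : 0 ≤ ε) (hδ : 1 - δ ≤ (t.card : ℝ) / s.card)
    (hft : ∀ i ∈ t, ‖f i‖ ≤ ε) (hfs : ∀ i ∈ s, ‖f i‖ ≤ C) :
    ‖(s.card : ℝ)⁻¹ • ∑ i ∈ s, f i‖ ≤ ε + C * δ := by
  classical
  have hcard : (0 : ℝ) < s.card := Nat.cast_pos.2 hs.card_pos
  have hC : 0 ≤ C := (norm_nonneg _).trans (hfs _ hs.choose_spec)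
  have hcard_le : (t.card : ℝ) ≤ s.card := Nat.cast_le.2 (Finset.card_le_card hts)
  have hcard_sdiff : ((s \ t).card : ℝ) ≤ s.card * δ := by
    rw [Finset.cast_card_sdiff hts]
    linarith [(le_div_iff₀ hcard).1 hδ]
  rw [norm_smul, norm_inv, RCLike.norm_natCast, inv_mul_le_iff₀ hcard]
  calc ‖∑ i ∈ s, f i‖
      ≤ ∑ i ∈ s, ‖f i‖ := norm_sum_le _ _
    _ = ∑ i ∈ s \ t, ‖f i‖ + ∑ i ∈ t, ‖f i‖ := (Finset.sum_sdiff hts).symm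
    _ ≤ (s \ t).card * C + t.card * ε := by
        simp only [← nsmul_eq_mul]
        exact add_le_add
          (Finset.sum_le_card_nsmul _ _ _ fun i hi => hfs i (Finset.sdiff_subset hi))
          (Finset.sum_le_card_nsmul _ _ _ hft)
    _ ≤ s.card * δ * C + s.card * ε := by gcongr
    _ = s.card * (ε + C * δ) := by ring

end Mean

section Permutation

variable {Q E : Type*} {G : Q → Q} {X : Finset Q}

lemma IsPeriodicOrbit.nonempty (hX : IsPeriodicOrbit G X) : X.Nonempty :=
  Finset.card_pos.1 hX.1

lemma IsPeriodicOrbit.bijOn (hX : IsPeriodicOrbit G X) : Set.BijOn G X X := by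
  obtain ⟨hcard, x, hx, hXx⟩ := hX
  have hper : Function.IsPeriodicPt G X.card x := hx
  have hmaps : Set.MapsTo G X X := by
    rw [hXx]
    rintro _ ⟨i, -, rfl⟩
    refine ⟨(i + 1) % X.card, Nat.mod_lt _ hcard, ?_⟩
    rw [hper.iterate_mod_apply, Function.iterate_succ_apply']
  have hpts : (X : Set Q) ⊆ Function.ptsOfPeriod G X.card := by
    rw [hXx]
    rintro _ ⟨i, -, rfl⟩
    exact hper.apply_iterate i
  have hinj : Set.InjOn G X := (Function.bijOn_ptsOfPeriod G hcard).injOn.mono hpts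
  exact (X.finite_toSet.injOn_iff_bijOn_of_mapsTo hmaps).1 hinj

lemma sum_comp_iterate_of_bijOn [AddCommMonoid E] (hG : Set.BijOn G X X) (φ : Q → E) (i : ℕ) :
    ∑ x ∈ X, φ (G^[i] x) = ∑ x ∈ X, φ x :=
  have hGi := hG.iterate i
  Finset.sum_nbij G^[i] hGi.mapsTo hGi.injOn hGi.surjOn fun _ _ => rfl

lemma sum_birkhoffAverage_of_bijOn (R : Type*) [DivisionSemiring R] [CharZero R]
    [AddCommMonoid E] [Module R E] (hG : Set.BijOn G X X) (φ : Q → E) {k : ℕ} (hk : k ≠ 0) :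
    ∑ x ∈ X, birkhoffAverage R G φ k x = ∑ x ∈ X, φ x := by
  have hk' : (k : R) ≠ 0 := Nat.cast_ne_zero.2 hk
  simp only [birkhoffAverage, birkhoffSum]
  rw [← Finset.smul_sum, Finset.sum_comm]
  simp only [sum_comp_iterate_of_bijOn hG, Finset.sum_const, Finset.card_range]
  rw [← Nat.cast_smul_eq_nsmul R, inv_smul_smul₀ hk']

lemma norm_birkhoffAverage_le_of_mapsTo [NormedAddCommGroup E] [NormedSpace ℝ E] {s : Set Q}
    (hG : Set.MapsTo G s s) {φ : Q → E} {M : ℝ} (hφ : ∀ x ∈ s, ‖φ x‖ ≤ M) {k : ℕ} (hk : k ≠ 0)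
    {x : Q} (hx : x ∈ s) : ‖birkhoffAverage ℝ G φ k x‖ ≤ M := by
  simpa only [birkhoffAverage, birkhoffSum, Finset.card_range] using
    norm_inv_card_smul_sum_le (Finset.nonempty_range_iff.2 hk)
      fun i _ => hφ _ (hG.iterate i hx)

end Permutation

section Integral

variable {ι Q E : Type*} [MeasurableSpace Q] [MeasurableSingletonClass Q]
  [NormedAddCommGroup E] [NormedSpace ℝ E] [CompleteSpace E]

lemma integral_inv_smul_sum_dirac (k : ℕ) (s : Finset ι) (g : ι → Q) (φ : Q → E) :
    ∫ y, φ y ∂((k : ℝ≥0∞)⁻¹ • ∑ i ∈ s, Measure.dirac (g i)) = (k : ℝ)⁻¹ • ∑ i ∈ s, φ (g i) := by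
  rw [integral_smul_measure,
    integral_finsetSum_measure fun i _ => integrable_dirac enorm_lt_top]
  simp only [integral_dirac, ENNReal.toReal_inv, ENNReal.toReal_natCast]

lemma integral_unifOrbit (X : Finset Q) (φ : Q → E) :
    ∫ y, φ y ∂(unifOrbit X) = (X.card : ℝ)⁻¹ • ∑ x ∈ X, φ x :=
  integral_inv_smul_sum_dirac X.card X id φ

lemma integral_nuMeas (G : Q → Q) (k : ℕ) (x : Q) (φ : Q → E) :
    ∫ y, φ y ∂(nuMeas G k x) = birkhoffAverage ℝ G φ k x :=
  integral_inv_smul_sum_dirac k (Finset.range k) (G^[·] x) φ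

lemma norm_integral_unifOrbit_le {X : Finset Q} (hX : X.Nonempty) {φ : Q → E} {M : ℝ}
    (hφ : ∀ x ∈ X, ‖φ x‖ ≤ M) : ‖∫ y, φ y ∂(unifOrbit X)‖ ≤ M := by
  rw [integral_unifOrbit]
  exact norm_inv_card_smul_sum_le hX hφ

theorem stmt1_general {G : Q → Q} {X S : Finset Q} (hX : X.Nonempty) (hG : Set.BijOn G X X)
    {φ : Q → E} {M : ℝ} (hφ : ∀ x ∈ X, ‖φ x‖ ≤ M) {c : E} (hc : ‖c‖ ≤ M) {k : ℕ} (hk : k ≠ 0)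
    {ε δ : ℝ} (hε : 0 ≤ ε) (hSX : S ⊆ X) (hS : 1 - δ ≤ (S.card : ℝ) / X.card)
    (hSc : ∀ x ∈ S, ‖∫ y, φ y ∂(nuMeas G k x) - c‖ ≤ ε) :
    ‖∫ y, φ y ∂(unifOrbit X) - c‖ ≤ ε + 2 * M * δ := by
  simp only [integral_nuMeas] at hSc
  have hXc : ∀ x ∈ X, ‖birkhoffAverage ℝ G φ k x - c‖ ≤ 2 * M := fun x hx => by
    rw [two_mul]
    exact norm_sub_le_of_le (norm_birkhoffAverage_le_of_mapsTo hG.mapsTo hφ hk hx) hc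
  rw [integral_unifOrbit, ← sum_birkhoffAverage_of_bijOn ℝ hG φ hk,
    ← inv_card_smul_sum_sub_const hX]
  exact norm_inv_card_smul_sum_le_of_subset hX hSX hε hS hSc hXc

end Integral

/-- The key Cauchy estimate in the proof of Lemma 2.2: under the approximation
hypotheses for a fixed `ε`, a continuous `φ` bounded by `M`, and a threshold `N`,
one has `|∫ φ dμ_m − ∫ φ dμ_n| ≤ (1 + 2M)ε` for all `m > n > N`. -/
theorem stmt1 {Q : Type*} [MetricSpace Q] [CompactSpace Q]
    [MeasurableSpace Q] [BorelSpace Q]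
    (G : Q → Q) (hG : Continuous G)
    (X : ℕ → Finset Q) (hXper : ∀ n, IsPeriodicOrbit G (X n))
    (hXmono : StrictMono fun n => (X n).card)
    (ε : ℝ) (hε : 0 < ε) (φ : C(Q, ℝ)) (M : ℝ) (hM : ∀ x : Q, |φ x| < M)
    (N : ℕ) (Xt : ℕ → Finset Q) (hXt : ∀ m, Xt m ⊆ X m)
    (h1 : ∀ m, N < m → 1 - ε < ((Xt m).card : ℝ) / ((X m).card : ℝ))
    (h2 : ∀ m, N < m → ∀ n, N ≤ n → n < m → ∀ x ∈ Xt m,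
      |(∫ y, φ y ∂(nuMeas G (X n).card x)) - ∫ y, φ y ∂(unifOrbit (X n))| < ε) :
    ∀ m n, N < n → n < m →
      |(∫ y, φ y ∂(unifOrbit (X m))) - ∫ y, φ y ∂(unifOrbit (X n))| ≤ (1 + 2 * M) * ε := by
  intro m n hn hnm
  have hφ : ∀ k, ∀ x ∈ X k, ‖φ x‖ ≤ M := fun _ x _ => (hM x).le
  exact (stmt1_general (hXper m).nonempty (hXper m).bijOn (hφ m)
    (norm_integral_unifOrbit_le (hXper n).nonempty (hφ n)) (hXper n).1.ne' hε.le (hXt m)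
    (h1 m (hn.trans hnm)).le
    fun x hx => (h2 m (hn.trans hnm) n hn.le hnm x hx).le).trans_eq (by ring)
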